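/- Let 0 < a < b. Then there exist functions w₊, w₋ : [a,b] → ℝ, twice continuously differentiable on [a,b], such that: w₊(a) = w₊(b) = 0, w₊(r) > 0 for all r ∈ (a,b), and −𝓕(r, w₊''(r), w₊'(r)/r) = w₊(r)^p for all r ∈ (a,b); and w₋(a) = w₋(b) = 0, w₋(r) < 0 for all r ∈ (a,b), and −𝓕(r, w₋''(r), w₋'(r)/r) = −|w₋(r)|^p for all r ∈ (a,b). (Equivalently: the Dirichlet problem −F(x,D²u) = |u|^{p−1}u in the annulus A_{a,b} = {x ∈ ℝⁿ : a < |x| < b}, u = 0 on ∂A_{a,b}, has a positive and a negative radial solution for every p > 1.) -/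

import Mathlib

open Real Set

/-- Uniform ellipticity of the radial form `𝓕(r, m, l)` of a uniformly elliptic operator. -/
def UnifElliptic (n : ℕ) (lam Lam : ℝ) (F : ℝ → ℝ → ℝ → ℝ) : Prop :=
  ∀ r : ℝ, 0 < r → ∀ m l s t : ℝ, 0 ≤ s → 0 ≤ t →
    lam * (s + ((n : ℝ) - 1) * t) ≤ F r (m + s) (l + t) - F r m l ∧
      F r (m + s) (l + t) - F r m l ≤ Lam * (s + ((n : ℝ) - 1) * t)

section RadialSolutions

open Filter Topology
open scoped NNReal

/-! ### Real-variable lemmas -/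

theorem sub_le_mul_sub_of_hasDerivAt_le {f f' : ℝ → ℝ} {x y C : ℝ} (hxy : x ≤ y)
    (hf : ∀ t ∈ Icc x y, HasDerivAt f (f' t) t) (hC : ∀ t ∈ Icc x y, f' t ≤ C) :
    f y - f x ≤ C * (y - x) := by
  refine (convex_Icc x y).image_sub_le_mul_sub_of_deriv_le
    (fun t ht => (hf t ht).continuousAt.continuousWithinAt)
    (fun t ht => (hf t (interior_subset ht)).differentiableAt.differentiableWithinAt)
    (fun t ht => ?_) x (left_mem_Icc.2 hxy) y (right_mem_Icc.2 hxy) hxy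
  rw [(hf t (interior_subset ht)).deriv]
  exact hC t (interior_subset ht)

theorem mul_sub_le_sub_of_le_hasDerivAt {f f' : ℝ → ℝ} {x y C : ℝ} (hxy : x ≤ y)
    (hf : ∀ t ∈ Icc x y, HasDerivAt f (f' t) t) (hC : ∀ t ∈ Icc x y, C ≤ f' t) :
    C * (y - x) ≤ f y - f x := by
  have h := sub_le_mul_sub_of_hasDerivAt_le (f := fun t => -f t) (f' := fun t => -f' t) (C := -C)
    hxy (fun t ht => (hf t ht).neg) (fun t ht => neg_le_neg (hC t ht))
  linarith

/-- A function that is nonincreasing wherever it exceeds `c` cannot cross `c` upwards. -/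
theorem le_of_hasDerivAt_nonpos_of_lt {z z' : ℝ → ℝ} {r t c : ℝ} (hrt : r ≤ t)
    (hz : ∀ s ∈ Icc r t, HasDerivAt z (z' s) s) (hz' : ∀ s ∈ Icc r t, c < z s → z' s ≤ 0)
    (hr : z r ≤ c) : z t ≤ c := by
  by_contra! ht
  have hcont : ContinuousOn z (Icc r t) := fun s hs => (hz s hs).continuousAt.continuousWithinAt
  have hS : IsCompact (Icc r t ∩ z ⁻¹' Iic c) :=
    isCompact_Icc.of_isClosed_subset (hcont.preimage_isClosed_of_isClosed isClosed_Icc isClosed_Iic)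
      inter_subset_left
  obtain ⟨s₀, ⟨hs₀, hzs₀⟩, hmax⟩ := hS.exists_isGreatest ⟨r, left_mem_Icc.2 hrt, hr⟩
  have hlt : ∀ s ∈ Ioc s₀ t, c < z s := fun s hs => by
    by_contra! h
    exact absurd (hmax ⟨⟨hs₀.1.trans hs.1.le, hs.2⟩, h⟩) (not_le.2 hs.1)
  have hanti : AntitoneOn z (Icc s₀ t) := by
    refine antitoneOn_of_deriv_nonpos (convex_Icc _ _)
      (hcont.mono (Icc_subset_Icc_left hs₀.1)) (fun s hs => ?_) (fun s hs => ?_)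
    all_goals
      rw [interior_Icc] at hs
      have hs' : s ∈ Icc r t := ⟨hs₀.1.trans hs.1.le, hs.2.le⟩
    · exact (hz s hs').differentiableAt.differentiableWithinAt
    · rw [(hz s hs').deriv]
      exact hz' s hs' (hlt s ⟨hs.1, hs.2.le⟩)
  have := hanti (left_mem_Icc.2 hs₀.2) (right_mem_Icc.2 hs₀.2) hs₀.2
  have h2 : z s₀ ≤ c := hzs₀
  linarith

/-- A continuous function which stays nonpositive once it is nonpositive
changes sign at most once. -/
theorem exists_sign_change {ψ : ℝ → ℝ} {a b : ℝ} (hab : a ≤ b) (hψ : ContinuousOn ψ (Icc a b))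
    (ha : 0 < ψ a) (h : ∀ r ∈ Icc a b, ∀ t ∈ Icc r b, ψ r ≤ 0 → ψ t ≤ 0) :
    ∃ τ ∈ Icc a b, (∀ r ∈ Icc a τ, 0 ≤ ψ r) ∧ (τ < b → ∀ r ∈ Icc τ b, ψ r ≤ 0) := by
  rcases (Icc a b ∩ ψ ⁻¹' Iic 0).eq_empty_or_nonempty with he | hne
  · refine ⟨b, right_mem_Icc.2 hab, fun r hr => ?_, fun hlt => absurd hlt (lt_irrefl _)⟩
    by_contra! hneg
    exact he.subset ⟨hr, hneg.le⟩
  have hS : IsCompact (Icc a b ∩ ψ ⁻¹' Iic 0) :=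
    isCompact_Icc.of_isClosed_subset (hψ.preimage_isClosed_of_isClosed isClosed_Icc isClosed_Iic)
      inter_subset_left
  obtain ⟨τ, ⟨hτ, hψτ⟩, hmin⟩ := hS.exists_isLeast hne
  have hψτ : ψ τ ≤ 0 := hψτ
  refine ⟨τ, hτ, fun r hr => ?_, fun _ r hr => h τ hτ r hr hψτ⟩
  by_contra! hneg
  obtain ⟨s, hs, hs0⟩ := intermediate_value_Icc' hr.1
    (hψ.mono (Icc_subset_Icc_right (hr.2.trans hτ.2))) ⟨hneg.le, ha.le⟩
  have hτs : τ ≤ s := hmin ⟨⟨hs.1, hs.2.trans (hr.2.trans hτ.2)⟩, hs0.le⟩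
  have : s = r := le_antisymm hs.2 (hr.2.trans hτs)
  rw [this] at hs0
  linarith

/-- A priori bound for nonnegative nonincreasing functions satisfying
`u'' ≤ -k u' - κ u ^ p` with `p > 1` on an interval of length `2 δ`. -/
theorem le_of_superlinear_decreasing {u v v' : ℝ → ℝ} {c δ k κ p : ℝ} (hδ : 0 < δ) (hk : 0 ≤ k)
    (hκ : 0 < κ) (hp : 1 < p)
    (hu : ∀ r ∈ Icc c (c + 2 * δ), HasDerivAt u (v r) r)
    (hv : ∀ r ∈ Icc c (c + 2 * δ), HasDerivAt v (v' r) r)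
    (hv0 : ∀ r ∈ Icc c (c + 2 * δ), v r ≤ 0) (hu0 : ∀ r ∈ Icc c (c + 2 * δ), 0 ≤ u r)
    (hv' : ∀ r ∈ Icc c (c + 2 * δ), v' r ≤ -(k * v r) - κ * u r ^ p) :
    u c ≤ (1 + exp (2 * k * δ)) * (exp (2 * k * δ) / (κ * δ ^ 2)) ^ (1 / (p - 1)) := by
  set E := exp (2 * k * δ) with hE
  have hE0 : 0 < E := exp_pos _
  have hE1 : 1 ≤ E := one_le_exp (by positivity)
  set φ : ℝ → ℝ := fun r => exp (k * (r - c)) * v r with hφ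
  have hφd : ∀ r ∈ Icc c (c + 2 * δ),
      HasDerivAt φ (exp (k * (r - c)) * (v' r + k * v r)) r := fun r hr => by
    have h1 : HasDerivAt (fun r => k * (r - c)) (k * 1) r :=
      ((hasDerivAt_id r).sub_const c).const_mul k
    exact (h1.exp.mul (hv r hr)).congr_deriv (by ring)
  have hexp1 : ∀ r ∈ Icc c (c + 2 * δ), 1 ≤ exp (k * (r - c)) := fun r hr =>
    one_le_exp (mul_nonneg hk (by linarith [hr.1]))
  have hexpE : ∀ r ∈ Icc c (c + 2 * δ), exp (k * (r - c)) ≤ E := fun r hr => by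
    rw [hE]
    refine exp_le_exp.2 ?_
    nlinarith [hr.2]
  have hφ' : ∀ r ∈ Icc c (c + 2 * δ),
      exp (k * (r - c)) * (v' r + k * v r) ≤ -(κ * u r ^ p) := fun r hr => by
    have h1 := hv' r hr
    have h2 : 0 ≤ κ * u r ^ p := mul_nonneg hκ.le (rpow_nonneg (hu0 r hr) p)
    nlinarith [hexp1 r hr]
  have hφ'0 : ∀ r ∈ Icc c (c + 2 * δ), exp (k * (r - c)) * (v' r + k * v r) ≤ 0 := fun r hr =>
    (hφ' r hr).trans (neg_nonpos.2 (mul_nonneg hκ.le (rpow_nonneg (hu0 r hr) p)))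
  have hφanti : ∀ x ∈ Icc c (c + 2 * δ), ∀ y ∈ Icc c (c + 2 * δ), x ≤ y → φ y ≤ φ x :=
    fun x hx y hy hxy => by
      have := sub_le_mul_sub_of_hasDerivAt_le hxy
        (fun t ht => hφd t ⟨hx.1.trans ht.1, ht.2.trans hy.2⟩)
        (fun t ht => hφ'0 t ⟨hx.1.trans ht.1, ht.2.trans hy.2⟩)
      linarith
  have hcm : c ∈ Icc c (c + 2 * δ) := ⟨le_rfl, by linarith⟩
  have hmm : c + δ ∈ Icc c (c + 2 * δ) := ⟨by linarith, by linarith⟩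
  have hdm : c + 2 * δ ∈ Icc c (c + 2 * δ) := ⟨by linarith, le_rfl⟩
  have huanti : ∀ x ∈ Icc c (c + 2 * δ), ∀ y ∈ Icc c (c + 2 * δ), x ≤ y → u y ≤ u x :=
    fun x hx y hy hxy => by
      have := sub_le_mul_sub_of_hasDerivAt_le hxy
        (fun t ht => hu t ⟨hx.1.trans ht.1, ht.2.trans hy.2⟩)
        (fun t ht => hv0 t ⟨hx.1.trans ht.1, ht.2.trans hy.2⟩)
      linarith
  set P := -φ (c + δ) with hP
  set U := u (c + δ) with hU
  have hU0 : 0 ≤ U := hu0 _ hmm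
  have hP0 : 0 ≤ P := by
    have h1 := hv0 _ hmm
    have h2 := exp_pos (k * (c + δ - c))
    simp only [hP, hφ]
    nlinarith
  have hfirst : u c - U ≤ P * δ := by
    have := mul_sub_le_sub_of_le_hasDerivAt (f := u) (f' := v) (C := -P)
      (x := c) (y := c + δ) (by linarith)
      (fun t ht => hu t ⟨ht.1, by linarith [ht.2]⟩) (fun t ht => by
        have ht' : t ∈ Icc c (c + 2 * δ) := ⟨ht.1, by linarith [ht.2]⟩
        have h1 := hφanti t ht' _ hmm ht.2
        have h2 : φ t ≤ v t := by
          simp only [hφ]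
          nlinarith [hexp1 t ht', hv0 t ht']
        linarith)
    linarith
  have hsecond : P * δ ≤ U * E := by
    have := sub_le_mul_sub_of_hasDerivAt_le (f := u) (f' := v) (C := -(P / E))
      (x := c + δ) (y := c + 2 * δ) (by linarith)
      (fun t ht => hu t ⟨by linarith [ht.1], ht.2⟩) (fun t ht => by
        have ht' : t ∈ Icc c (c + 2 * δ) := ⟨by linarith [ht.1], ht.2⟩
        have h1 := hφanti _ hmm t ht' ht.1
        have h2 : E * v t ≤ φ t := by
          simp only [hφ]
          nlinarith [hexpE t ht', hv0 t ht']
        rw [← neg_div, le_div_iff₀ hE0]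
        linarith)
    have h3 := hu0 _ hdm
    have h4 : P / E * δ ≤ U := by linarith
    rw [div_mul_eq_mul_div, div_le_iff₀ hE0] at h4
    exact h4
  have hthird : κ * U ^ p * δ ≤ P := by
    have := sub_le_mul_sub_of_hasDerivAt_le (f := φ) (C := -(κ * U ^ p))
      (x := c) (y := c + δ) (by linarith)
      (fun t ht => hφd t ⟨ht.1, by linarith [ht.2]⟩) (fun t ht => by
        have ht' : t ∈ Icc c (c + 2 * δ) := ⟨ht.1, by linarith [ht.2]⟩
        refine (hφ' t ht').trans (neg_le_neg (mul_le_mul_of_nonneg_left ?_ hκ.le))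
        exact rpow_le_rpow hU0 (huanti t ht' _ hmm ht.2) (by linarith))
    have h2 : φ c ≤ 0 := by
      simp only [hφ, sub_self, mul_zero, exp_zero, one_mul]
      exact hv0 c hcm
    linarith
  have hUle : U ≤ (E / (κ * δ ^ 2)) ^ (1 / (p - 1)) := by
    rcases hU0.eq_or_lt with h0 | hUpos
    · rw [← h0]
      positivity
    have h1 : U ^ (p - 1) ≤ E / (κ * δ ^ 2) := by
      rw [le_div_iff₀ (by positivity), rpow_sub_one hUpos.ne', div_mul_eq_mul_div,
        div_le_iff₀ hUpos]
      nlinarith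
    calc U = (U ^ (p - 1)) ^ (1 / (p - 1)) := by
          rw [← rpow_mul hU0, mul_one_div_cancel (by linarith), rpow_one]
      _ ≤ _ := rpow_le_rpow (by positivity) h1 (by
          have : 0 < p - 1 := by linarith
          positivity)
  nlinarith

theorem exists_pos_le_mul_rpow_le {A D p : ℝ} (hA : 0 < A) (hD : 0 < D) (hp : 1 < p) :
    ∃ x, 0 < x ∧ x ≤ A ∧ D * x ^ p ≤ x := by
  have hp' : 0 < p - 1 := by linarith
  have hq : 0 < (1 / D) ^ (1 / (p - 1)) := by positivity
  refine ⟨min A ((1 / D) ^ (1 / (p - 1))), lt_min hA hq, min_le_left _ _, ?_⟩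
  set x := min A ((1 / D) ^ (1 / (p - 1))) with hx
  have hx0 : 0 < x := lt_min hA hq
  have h1 : x ^ (p - 1) ≤ 1 / D := by
    calc x ^ (p - 1) ≤ ((1 / D) ^ (1 / (p - 1))) ^ (p - 1) :=
          rpow_le_rpow hx0.le (min_le_right _ _) hp'.le
      _ = 1 / D := by rw [← rpow_mul (by positivity), one_div_mul_cancel hp'.ne', rpow_one]
  rw [rpow_sub_one hx0.ne', div_le_div_iff₀ hx0 hD] at h1
  linarith

/-- Truncated power nonlinearity. -/
noncomputable def truncPow (p M u : ℝ) : ℝ := max 0 (min M u) ^ p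

theorem truncPow_nonneg (p M u : ℝ) : 0 ≤ truncPow p M u := rpow_nonneg (le_max_left _ _) p

theorem truncPow_eq {p M u : ℝ} (h0 : 0 ≤ u) (hM : u ≤ M) : truncPow p M u = u ^ p := by
  rw [truncPow, min_eq_right hM, max_eq_right h0]

theorem truncPow_zero {p M : ℝ} (hp : 1 < p) (hM : 0 ≤ M) : truncPow p M 0 = 0 := by
  rw [truncPow_eq le_rfl hM, zero_rpow (by linarith)]

theorem exists_lipschitzWith_truncPow {p M : ℝ} (hp : 1 < p) (hM : 0 ≤ M) :
    ∃ K : ℝ≥0, LipschitzWith K (truncPow p M) := by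
  have hle : ∀ x y : ℝ, 0 ≤ x → x ≤ y → y ≤ M → y ^ p - x ^ p ≤ p * M ^ (p - 1) * (y - x) :=
    fun x y hx hxy hy => sub_le_mul_sub_of_hasDerivAt_le hxy
      (fun t _ => hasDerivAt_rpow_const (Or.inr hp.le)) (fun t ht =>
        mul_le_mul_of_nonneg_left
          (rpow_le_rpow (hx.trans ht.1) (ht.2.trans hy) (by linarith)) (by linarith))
  have hclamp : ∀ u, max 0 (min M u) ≤ M := fun u => max_le hM (min_le_left _ _)
  have hC : 0 ≤ p * M ^ (p - 1) := mul_nonneg (by linarith) (rpow_nonneg hM _)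
  refine ⟨⟨p * M ^ (p - 1), hC⟩, LipschitzWith.of_le_add_mul _ fun x y => ?_⟩
  have hd : max 0 (min M x) - max 0 (min M y) ≤ dist x y := by
    have h := ((LipschitzWith.id.const_min M).const_max 0).dist_le_mul x y
    rw [NNReal.coe_one, one_mul, Real.dist_eq] at h
    exact (le_abs_self _).trans h
  change max 0 (min M x) ^ p ≤ max 0 (min M y) ^ p + p * M ^ (p - 1) * dist x y
  rcases le_total (max 0 (min M x)) (max 0 (min M y)) with h | h
  · have := rpow_le_rpow (le_max_left _ _) h (by linarith : 0 ≤ p)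
    have := mul_nonneg hC (dist_nonneg (x := x) (y := y))
    linarith
  · have := hle _ _ (le_max_left _ _) h (hclamp x)
    have := mul_le_mul_of_nonneg_left hd hC
    linarith

/-- Global existence for a globally Lipschitz planar vector field with equilibrium at the origin;
the solution is differentiable (from both sides) on all of `[a, b]`. -/
theorem exists_hasDerivAt_of_lipschitzWith {v : ℝ → ℝ × ℝ → ℝ × ℝ} {K : ℝ≥0}
    (hv : ∀ t, LipschitzWith K (v t)) (hc : ∀ x, Continuous fun t => v t x)
    (h0 : ∀ t, v t 0 = 0) {a b : ℝ} (hab : a < b) (x₀ : ℝ × ℝ) :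
    ∃ x : ℝ → ℝ × ℝ, x a = x₀ ∧ ∀ t ∈ Icc a b, HasDerivAt x (v t (x t)) t := by
  set R : ℝ := ‖x₀‖ * exp (K * (b - a)) with hR
  have hR0 : 0 ≤ R := by positivity
  set c : ℝ → ℝ := fun s => max (-R) (min R s) with hcdef
  have hcl : LipschitzWith 1 c := (LipschitzWith.id.const_min R).const_max (-R)
  have hcR : ∀ s, |c s| ≤ R := fun s =>
    abs_le.2 ⟨le_max_left _ _, max_le (by linarith) (min_le_left _ _)⟩
  have hcid : ∀ s, |s| ≤ R → c s = s := fun s hs => by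
    rw [abs_le] at hs
    simp only [hcdef]
    rw [min_eq_right hs.2, max_eq_right hs.1]
  set j : ℝ × ℝ → ℝ × ℝ := fun z => (c z.1, c z.2) with hj
  have hjl : LipschitzWith 1 j := by
    have h1 := (hcl.comp LipschitzWith.prod_fst).prodMk (hcl.comp LipschitzWith.prod_snd)
    simpa using h1
  have hjR : ∀ z, ‖j z‖ ≤ R := fun z => max_le (hcR _) (hcR _)
  have hjid : ∀ z, ‖z‖ ≤ R → j z = z := fun z hz =>
    Prod.ext (hcid _ ((le_max_left _ _).trans hz)) (hcid _ ((le_max_right _ _).trans hz))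
  have hj0 : j 0 = 0 := hjid 0 (by simpa using hR0)
  have hvn : ∀ t z, ‖v t z‖ ≤ K * ‖z‖ := fun t z => by
    simpa [h0] using (hv t).dist_le_mul z 0
  have hjn : ∀ z, ‖j z‖ ≤ ‖z‖ := fun z => by
    simpa [hj0] using hjl.dist_le_mul z 0
  set L : ℝ≥0 := K * ⟨R, hR0⟩ with hL
  set T : ℝ≥0 := ⟨b - a + 2, by linarith⟩ with hT
  have ha0 : a ∈ Icc (a - 1) (b + 1) := ⟨by linarith, by linarith⟩
  have hPL : IsPicardLindelof (fun t z => v t (j z)) (tmin := a - 1) (tmax := b + 1) ⟨a, ha0⟩ x₀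
      (L * T) 0 L K :=
    { lipschitzOnWith := fun t _ => by
        have := (hv t).comp hjl
        rw [mul_one] at this
        exact this.lipschitzOnWith
      continuousOn := fun x _ => (hc (j x)).continuousOn
      norm_le := fun t _ x _ => (hvn t _).trans (by
        rw [hL]
        exact mul_le_mul_of_nonneg_left (hjR x) K.2)
      mul_max_le := by
        simp only [NNReal.coe_mul, NNReal.coe_zero, sub_zero]
        refine mul_le_mul_of_nonneg_left ?_ L.2
        refine max_le ?_ ?_
        · change b + 1 - a ≤ b - a + 2
          linarith
        · change a - (a - 1) ≤ b - a + 2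
          linarith }
  obtain ⟨x, hxa, hx⟩ := hPL.exists_eq_forall_mem_Icc_hasDerivWithinAt₀
  have hxd : ∀ t ∈ Icc a b, HasDerivAt x (v t (j (x t))) t := fun t ht =>
    (hx t ⟨by linarith [ht.1], by linarith [ht.2]⟩).hasDerivAt
      (Icc_mem_nhds (by linarith [ht.1]) (by linarith [ht.2]))
  have hbound := norm_le_gronwallBound_of_norm_deriv_right_le (f := x) (δ := ‖x₀‖) (K := K)
    (ε := 0) (a := a) (b := b)
    (fun t ht => (hxd t ht).continuousAt.continuousWithinAt)
    (fun t ht => (hxd t (Ico_subset_Icc_self ht)).hasDerivWithinAt) (by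
      change ‖x a‖ ≤ _
      exact hxa ▸ le_rfl)
    (fun t _ => by
      rw [add_zero]
      exact (hvn t _).trans (mul_le_mul_of_nonneg_left (hjn _) K.2))
  refine ⟨x, hxa, fun t ht => ?_⟩
  have h1 : ‖x t‖ ≤ R := by
    refine (hbound t ht).trans ?_
    rw [gronwallBound_ε0, hR]
    gcongr
    exact ht.2
  have := hxd t ht
  rwa [hjid _ h1] at this

/-! ### Shooting -/

/-- Structural conditions on the right-hand side of `w'' = g r w' (f w)`, where the forcing term
`f w` is nonnegative. -/
structure IsShootingField (g : ℝ → ℝ → ℝ → ℝ) (k μ κ : ℝ) (K : ℝ≥0) : Prop where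
  continuous_time : ∀ q c, Continuous fun r => g r q c
  lipschitz : ∀ r, LipschitzWith K fun x : ℝ × ℝ => g r x.1 x.2
  lower : ∀ r q c, 0 ≤ c → -(k * |q|) - μ * c ≤ g r q c
  upper : ∀ r q c, 0 ≤ c → g r q c ≤ k * |q| - κ * c
  nonpos : ∀ r q c, 0 ≤ q → 0 ≤ c → g r q c ≤ 0

/-- `w` solves `w'' = g r w' (f w)` on `[a, b]` with `w a = 0`, `w' a = α` and `w' = z`. -/
structure IsShot (g : ℝ → ℝ → ℝ → ℝ) (f : ℝ → ℝ) (a b α : ℝ) (w z : ℝ → ℝ) : Prop where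
  left : w a = 0
  slope : z a = α
  deriv_fst : ∀ r ∈ Icc a b, HasDerivAt w (z r) r
  deriv_snd : ∀ r ∈ Icc a b, HasDerivAt z (g r (z r) (f (w r))) r

namespace IsShootingField

variable {g : ℝ → ℝ → ℝ → ℝ} {k μ κ : ℝ} {K : ℝ≥0}

theorem continuous_uncurry (hg : IsShootingField g k μ κ K) :
    Continuous fun x : ℝ × ℝ × ℝ => g x.1 x.2.1 x.2.2 :=
  continuous_prod_of_continuous_lipschitzWith' (fun x : ℝ × ℝ × ℝ => g x.1 x.2.1 x.2.2) K
    hg.lipschitz (fun x => hg.continuous_time x.1 x.2)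

theorem apply_zero (hg : IsShootingField g k μ κ K) (r : ℝ) : g r 0 0 = 0 := by
  have h1 := hg.lower r 0 0 le_rfl
  have h2 := hg.nonpos r 0 0 le_rfl le_rfl
  simp only [abs_zero, mul_zero, neg_zero, sub_zero] at h1
  linarith

/-- The planar vector field of the second-order equation. -/
theorem exists_lipschitzWith_planar (hg : IsShootingField g k μ κ K) {f : ℝ → ℝ} {Kf : ℝ≥0}
    (hf : LipschitzWith Kf f) :
    ∃ C : ℝ≥0, ∀ t, LipschitzWith C fun x : ℝ × ℝ => (x.2, g t x.2 (f x.1)) :=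
  ⟨_, fun t => LipschitzWith.prod_snd.prodMk ((hg.lipschitz t).comp
    (LipschitzWith.prod_snd.prodMk (hf.comp LipschitzWith.prod_fst)))⟩

theorem exists_isShot (hg : IsShootingField g k μ κ K) {f : ℝ → ℝ} {Kf : ℝ≥0}
    (hf : LipschitzWith Kf f) (hf0 : f 0 = 0) {a b : ℝ} (hab : a < b) (α : ℝ) :
    ∃ w z, IsShot g f a b α w z := by
  obtain ⟨C, hC⟩ := hg.exists_lipschitzWith_planar hf
  obtain ⟨x, hx0, hx⟩ := exists_hasDerivAt_of_lipschitzWith hC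
    (fun x => continuous_const.prodMk (hg.continuous_time _ _))
    (fun t => by simp [hf0, hg.apply_zero]) hab (0, α)
  refine ⟨fun t => (x t).1, fun t => (x t).2, by simp [hx0], by simp [hx0], fun r hr => ?_,
    fun r hr => ?_⟩
  · exact (hx r hr).fst
  · exact (hx r hr).snd

end IsShootingField

namespace IsShot

variable {g : ℝ → ℝ → ℝ → ℝ} {k μ κ : ℝ} {K : ℝ≥0} {f : ℝ → ℝ} {a b α : ℝ} {w z : ℝ → ℝ}

theorem continuousOn_snd (h : IsShot g f a b α w z) : ContinuousOn z (Icc a b) :=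
  fun r hr => (h.deriv_snd r hr).continuousAt.continuousWithinAt

theorem continuousOn_fst (h : IsShot g f a b α w z) : ContinuousOn w (Icc a b) :=
  fun r hr => (h.deriv_fst r hr).continuousAt.continuousWithinAt

theorem hasDerivAt_prod (h : IsShot g f a b α w z) {r : ℝ} (hr : r ∈ Icc a b) :
    HasDerivAt (fun t => (w t, z t)) (z r, g r (z r) (f (w r))) r :=
  (h.deriv_fst r hr).prodMk (h.deriv_snd r hr)

/-- Slopes do not exceed a nonnegative level again once they are below it. -/
theorem slope_le (h : IsShot g f a b α w z) (hg : IsShootingField g k μ κ K) (hf : ∀ u, 0 ≤ f u)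
    {r t c : ℝ} (hr : r ∈ Icc a b) (ht : t ∈ Icc r b) (hc : 0 ≤ c) (hzr : z r ≤ c) : z t ≤ c :=
  le_of_hasDerivAt_nonpos_of_lt ht.1
    (fun s hs => h.deriv_snd s ⟨hr.1.trans hs.1, hs.2.trans ht.2⟩)
    (fun _ _ hlt => hg.nonpos _ _ _ (hc.trans hlt.le) (hf _)) hzr

theorem le_mul_length (h : IsShot g f a b α w z) (hg : IsShootingField g k μ κ K)
    (hf : ∀ u, 0 ≤ f u) (hα : 0 ≤ α) {r : ℝ} (hr : r ∈ Icc a b) : w r ≤ α * (b - a) := by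
  have hab : a ≤ b := hr.1.trans hr.2
  have := sub_le_mul_sub_of_hasDerivAt_le hr.1
    (fun t ht => h.deriv_fst t ⟨ht.1, ht.2.trans hr.2⟩) (C := α)
    (fun t ht => h.slope_le hg hf (left_mem_Icc.2 hab) ⟨ht.1, ht.2.trans hr.2⟩ hα h.slope.le)
  rw [h.left] at this
  nlinarith [hr.2]

theorem exists_turning_point (h : IsShot g f a b α w z) (hg : IsShootingField g k μ κ K)
    (hf : ∀ u, 0 ≤ f u) (hα : 0 < α) (hab : a ≤ b) :
    ∃ τ ∈ Icc a b, (∀ r ∈ Icc a τ, 0 ≤ z r) ∧ (τ < b → ∀ r ∈ Icc τ b, z r ≤ 0) :=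
  exists_sign_change hab h.continuousOn_snd (by rw [h.slope]; exact hα)
    (fun _ hr _ ht => h.slope_le hg hf hr ht le_rfl)

/-- If the forcing is small compared with the initial slope, the solution increases up to `b`. -/
theorem lower_bound (h : IsShot g f a b α w z) (hg : IsShootingField g k μ κ K) (hk : 0 ≤ k)
    (hμ : 0 ≤ μ) {τ : ℝ} (hτ : τ ∈ Icc a b)
    (hup : ∀ r ∈ Icc a τ, 0 ≤ z r) (hdown : τ < b → ∀ r ∈ Icc τ b, z r ≤ 0)
    (hf : ∀ u, 0 ≤ f u) {C β : ℝ} (hC : ∀ r ∈ Icc a τ, f (w r) ≤ C) (hβ : 0 < β)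
    (hα : exp (k * (b - a)) * (β + μ * C * (b - a)) ≤ α) :
    τ = b ∧ β * (b - a) ≤ w b := by
  have hC0 : 0 ≤ C := (hf _).trans (hC a (left_mem_Icc.2 hτ.1))
  set E := exp (k * (b - a)) with hE
  have hE0 : 0 < E := exp_pos _
  have hexp1 : ∀ r ∈ Icc a b, exp (k * (r - a)) ≤ E := fun r hr =>
    exp_le_exp.2 (mul_le_mul_of_nonneg_left (by linarith [hr.2]) hk)
  have hz : ∀ r ∈ Icc a τ, β ≤ z r := fun r hr => by
    have hrb : r ∈ Icc a b := ⟨hr.1, hr.2.trans hτ.2⟩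
    have h1 := mul_sub_le_sub_of_le_hasDerivAt (f := fun s => exp (k * (s - a)) * z s)
      (f' := fun s => exp (k * (s - a)) * (g s (z s) (f (w s)) + k * z s)) (C := -(E * (μ * C)))
      hr.1 (fun s hs => by
        have h1 : HasDerivAt (fun r => k * (r - a)) (k * 1) s :=
          ((hasDerivAt_id s).sub_const a).const_mul k
        exact (h1.exp.mul (h.deriv_snd s ⟨hs.1, hs.2.trans hrb.2⟩)).congr_deriv (by ring))
      (fun s hs => by
        have hsτ : s ∈ Icc a τ := ⟨hs.1, hs.2.trans hr.2⟩
        have h2 := hg.lower s (z s) (f (w s)) (hf _)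
        rw [abs_of_nonneg (hup s hsτ)] at h2
        have h3 : μ * f (w s) ≤ μ * C := mul_le_mul_of_nonneg_left (hC s hsτ) hμ
        have h4 := hexp1 s ⟨hsτ.1, hsτ.2.trans hτ.2⟩
        have h5 := exp_pos (k * (s - a))
        have h6 : 0 ≤ μ * C := mul_nonneg hμ hC0
        have h7 : -(μ * C) ≤ g s (z s) (f (w s)) + k * z s := by linarith
        nlinarith)
    simp only [sub_self, mul_zero, exp_zero, one_mul, h.slope] at h1
    have h2 : exp (k * (r - a)) * z r ≤ E * z r :=
      mul_le_mul_of_nonneg_right (hexp1 r hrb) (hup r hr)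
    have h3 : E * (μ * C) * (r - a) ≤ E * (μ * C) * (b - a) :=
      mul_le_mul_of_nonneg_left (by linarith [hrb.2]) (by positivity)
    have h4 : E * β ≤ E * z r := by nlinarith
    exact le_of_mul_le_mul_left h4 hE0
  have hτb : τ = b := by
    by_contra hne
    have hlt := lt_of_le_of_ne hτ.2 hne
    have h1 := hdown hlt τ (left_mem_Icc.2 hτ.2)
    have h2 := hz τ (right_mem_Icc.2 hτ.1)
    linarith
  subst hτb
  refine ⟨rfl, ?_⟩
  have := mul_sub_le_sub_of_le_hasDerivAt hτ.1 h.deriv_fst hz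
  rwa [h.left, sub_zero] at this

/-- Once the solution is nonpositive to the right of `a`, it is nonincreasing from there on. -/
theorem antitone_of_nonpos (h : IsShot g f a b α w z) (hg : IsShootingField g k μ κ K)
    (hf : ∀ u, 0 ≤ f u) {t : ℝ} (ht : t ∈ Ioc a b) (hw : w t ≤ 0) :
    ∀ s ∈ Icc t b, z s ≤ 0 ∧ ∀ s' ∈ Icc s b, w s' ≤ w s := by
  obtain ⟨r, hr, hzr⟩ : ∃ r ∈ Icc a t, z r ≤ 0 := by
    by_contra! hpos
    have hmono : StrictMonoOn w (Icc a t) := by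
      refine strictMonoOn_of_deriv_pos (convex_Icc _ _)
        (h.continuousOn_fst.mono (Icc_subset_Icc_right ht.2)) (fun s hs => ?_)
      have hs' := interior_subset hs
      rw [(h.deriv_fst s ⟨hs'.1, hs'.2.trans ht.2⟩).deriv]
      exact hpos s hs'
    have := hmono (left_mem_Icc.2 ht.1.le) (right_mem_Icc.2 ht.1.le) ht.1
    linarith [h.left]
  have hz : ∀ s ∈ Icc t b, z s ≤ 0 := fun s hs =>
    h.slope_le hg hf ⟨hr.1, hr.2.trans ht.2⟩ ⟨hr.2.trans hs.1, hs.2⟩ le_rfl hzr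
  refine fun s hs => ⟨hz s hs, fun s' hs' => ?_⟩
  have := sub_le_mul_sub_of_hasDerivAt_le hs'.1
    (fun x hx => h.deriv_fst x ⟨ht.1.le.trans (hs.1.trans hx.1), hx.2.trans hs'.2⟩) (C := 0)
    (fun x hx => hz x ⟨hs.1.trans hx.1, hx.2.trans hs'.2⟩)
  linarith

theorem nonneg_of_right_nonneg (h : IsShot g f a b α w z) (hg : IsShootingField g k μ κ K)
    (hf : ∀ u, 0 ≤ f u) (hb : 0 ≤ w b) : ∀ r ∈ Icc a b, 0 ≤ w r := fun r hr => by
  by_contra! hneg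
  rcases hr.1.eq_or_lt with he | hlt
  · rw [← he, h.left] at hneg
    exact lt_irrefl _ hneg
  have := (h.antitone_of_nonpos hg hf ⟨hlt, hr.2⟩ hneg.le r (left_mem_Icc.2 hr.2)).2 b
    (right_mem_Icc.2 hr.2)
  linarith

/-- A solution with nonzero initial slope which vanishes at `b` and is nonnegative there
has no zero in the interior. -/
theorem pos_of_right_eq_zero (h : IsShot g f a b α w z) (hg : IsShootingField g k μ κ K)
    (hf : ∀ u, 0 ≤ f u) (hf0 : f 0 = 0) {Kf : ℝ≥0} (hfl : LipschitzWith Kf f) (hα : 0 < α)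
    (hb : w b = 0) : ∀ r ∈ Ioo a b, 0 < w r := fun t ht => by
  by_contra! hneg
  have hanti := h.antitone_of_nonpos hg hf ⟨ht.1, ht.2.le⟩ hneg
  have hzero : ∀ s ∈ Icc t b, w s = 0 := fun s hs => by
    have h1 := (hanti t (left_mem_Icc.2 ht.2.le)).2 s hs
    have h2 := (hanti s hs).2 b (right_mem_Icc.2 hs.2)
    linarith
  obtain ⟨s, hs⟩ := exists_between ht.2
  have hsab : s ∈ Icc a b := ⟨ht.1.le.trans hs.1.le, hs.2.le⟩
  have hzs : z s = 0 := by
    refine (h.deriv_fst s hsab).unique ((hasDerivAt_const s (0 : ℝ)).congr_of_eventuallyEq ?_)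
    filter_upwards [Icc_mem_nhds hs.1 hs.2] with x hx using hzero x hx
  obtain ⟨C, hC⟩ := hg.exists_lipschitzWith_planar hfl
  have hsub : Icc a s ⊆ Icc a b := Icc_subset_Icc_right hs.2.le
  have huniq := ODE_solution_unique_of_mem_Icc_left (a := a) (b := s) (s := fun _ => univ)
    (f := fun t => (w t, z t)) (g := fun _ => 0)
    (fun t _ => (hC t).lipschitzOnWith)
    (fun r hr => (h.hasDerivAt_prod (hsub hr)).continuousAt.continuousWithinAt)
    (fun r hr => (h.hasDerivAt_prod (hsub (Ioc_subset_Icc_self hr))).hasDerivWithinAt)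
    (fun _ _ => mem_univ _) continuousOn_const
    (fun r _ => by
      have := hasDerivWithinAt_const r (Iic r) (0 : ℝ × ℝ)
      simpa [hf0, hg.apply_zero, Prod.mk_zero_zero] using this)
    (fun _ _ => mem_univ _) (by simp [hzs, hzero s ⟨hs.1.le, hs.2.le⟩])
  have h1 := congrArg Prod.snd (huniq (left_mem_Icc.2 hsab.1))
  simp only [Prod.snd_zero, h.slope] at h1
  linarith

/-- A priori bound for solutions that remain nonnegative on `[a, b]`. -/
theorem turning_value_le (h : IsShot g f a b α w z) (hg : IsShootingField g k μ κ K) (hk : 0 ≤ k)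
    (hκ : 0 < κ) {p : ℝ} (hp : 1 < p) (hab : a < b) {τ : ℝ} (hτ : τ ∈ Icc a b)
    (hup : ∀ r ∈ Icc a τ, 0 ≤ z r) (hdown : τ < b → ∀ r ∈ Icc τ b, z r ≤ 0)
    (hw : ∀ r ∈ Icc a b, 0 ≤ w r) (hf : ∀ r ∈ Icc a b, f (w r) = w r ^ p) :
    w τ ≤ (1 + exp (2 * k * ((b - a) / 4))) *
      (exp (2 * k * ((b - a) / 4)) / (κ * ((b - a) / 4) ^ 2)) ^ (1 / (p - 1)) := by
  set δ := (b - a) / 4 with hδ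
  have hδ0 : 0 < δ := by linarith
  have hup' : ∀ r ∈ Icc a b, g r (z r) (f (w r)) ≤ k * |z r| - κ * w r ^ p := fun r hr => by
    rw [hf r hr]
    exact hg.upper _ _ _ (rpow_nonneg (hw r hr) p)
  rcases le_total τ ((a + b) / 2) with hmid | hmid
  · have hsub : ∀ r ∈ Icc τ (τ + 2 * δ), r ∈ Icc τ b := fun r hr =>
      ⟨hr.1, by linarith [hr.2]⟩
    have hsub' : ∀ r ∈ Icc τ (τ + 2 * δ), r ∈ Icc a b := fun r hr =>
      ⟨hτ.1.trans hr.1, (hsub r hr).2⟩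
    have hz : ∀ r ∈ Icc τ (τ + 2 * δ), z r ≤ 0 := fun r hr => hdown (by linarith) r (hsub r hr)
    refine le_of_superlinear_decreasing hδ0 hk hκ hp (fun r hr => h.deriv_fst r (hsub' r hr))
      (fun r hr => h.deriv_snd r (hsub' r hr)) hz (fun r hr => hw r (hsub' r hr))
      (fun r hr => ?_)
    have := hup' r (hsub' r hr)
    rw [abs_of_nonpos (hz r hr)] at this
    linarith
  · have hsub : ∀ r ∈ Icc (-τ) (-τ + 2 * δ), -r ∈ Icc a τ := fun r hr =>
      ⟨by linarith [hr.2], by linarith [hr.1]⟩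
    have hsub' : ∀ r ∈ Icc (-τ) (-τ + 2 * δ), -r ∈ Icc a b := fun r hr =>
      ⟨(hsub r hr).1, (hsub r hr).2.trans hτ.2⟩
    have := le_of_superlinear_decreasing (u := fun r => w (-r)) (v := fun r => -z (-r))
      (v' := fun r => g (-r) (z (-r)) (f (w (-r)))) (c := -τ) hδ0 hk hκ hp
      (fun r hr => ((h.deriv_fst _ (hsub' r hr)).comp r (hasDerivAt_neg r)).congr_deriv (by ring))
      (fun r hr => ((h.deriv_snd _ (hsub' r hr)).comp r (hasDerivAt_neg r)).neg.congr_deriv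
        (by ring))
      (fun r hr => neg_nonpos.2 (hup _ (hsub r hr))) (fun r hr => hw _ (hsub' r hr))
      (fun r hr => by
        have := hup' _ (hsub' r hr)
        rw [abs_of_nonneg (hup _ (hsub r hr))] at this
        linarith)
    simpa using this

end IsShot

/-- Lane-Emden type problem on `[a, b]` for a shooting field: a positive solution exists. -/
theorem IsShootingField.exists_positive_solution {g : ℝ → ℝ → ℝ → ℝ} {k μ κ : ℝ} {K : ℝ≥0}
    (hg : IsShootingField g k μ κ K) (hk : 0 ≤ k) (hμ : 0 < μ) (hκ : 0 < κ) {p : ℝ} (hp : 1 < p)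
    {a b : ℝ} (hab : a < b) :
    ∃ w z : ℝ → ℝ, (∀ r ∈ Icc a b, HasDerivAt w (z r) r) ∧
      (∀ r ∈ Icc a b, HasDerivAt z (g r (z r) (w r ^ p)) r) ∧
      w a = 0 ∧ w b = 0 ∧ ∀ r ∈ Ioo a b, 0 < w r := by
  set L := b - a with hL
  have hL0 : 0 < L := sub_pos.2 hab
  set H := (1 + exp (2 * k * (L / 4))) *
      (exp (2 * k * (L / 4)) / (κ * (L / 4) ^ 2)) ^ (1 / (p - 1)) with hH
  have hH0 : 0 < H := by positivity
  set E := exp (k * L) with hE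
  have hE0 : 0 < E := exp_pos _
  set A := E * (H / L + 1 + μ * H ^ p * L) with hA
  have hA0 : 0 < A := by positivity
  obtain ⟨α₀, hα₀, hα₀A, hα₀p⟩ := exists_pos_le_mul_rpow_le (p := p) hA0
    (D := 2 * E * μ * L ^ p * L) (by positivity) hp
  set f := truncPow p (A * L) with hfdef
  have hAL : 0 ≤ A * L := by positivity
  have hf : ∀ u, 0 ≤ f u := truncPow_nonneg _ _
  have hf0 : f 0 = 0 := truncPow_zero hp hAL
  obtain ⟨Kf, hfl⟩ : ∃ Kf : ℝ≥0, LipschitzWith Kf f := exists_lipschitzWith_truncPow hp hAL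
  choose W Z hWZ using fun α => hg.exists_isShot hfl hf0 hab α
  have hle : ∀ α, 0 < α → α ≤ A → ∀ r ∈ Icc a b, W α r ≤ A * L := fun α h0 h1 r hr =>
    ((hWZ α).le_mul_length hg hf h0.le hr).trans (mul_le_mul_of_nonneg_right h1 hL0.le)
  have hcont : Continuous fun α => W α b := by
    obtain ⟨C, hC⟩ := hg.exists_lipschitzWith_planar hfl
    refine (LipschitzWith.of_dist_le_mul (K := ⟨exp (C * (b - a)), (exp_pos _).le⟩)
      fun α β => ?_).continuous
    have := dist_le_of_trajectories_ODE (a := a) (b := b) hC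
      (f := fun t => (W α t, Z α t)) (g := fun t => (W β t, Z β t)) (δ := dist α β)
      (fun r hr => ((hWZ α).hasDerivAt_prod hr).continuousAt.continuousWithinAt)
      (fun r hr => ((hWZ α).hasDerivAt_prod (Ico_subset_Icc_self hr)).hasDerivWithinAt)
      (fun r hr => ((hWZ β).hasDerivAt_prod hr).continuousAt.continuousWithinAt)
      (fun r hr => ((hWZ β).hasDerivAt_prod (Ico_subset_Icc_self hr)).hasDerivWithinAt)
      (by simp [Prod.dist_eq, (hWZ α).left, (hWZ β).left, (hWZ α).slope, (hWZ β).slope])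
      b (right_mem_Icc.2 hab.le)
    rw [Prod.dist_eq, mul_comm] at this
    exact (le_max_left _ _).trans this
  have hsmall : 0 ≤ W α₀ b := by
    obtain ⟨τ, hτ, hup, hdown⟩ := (hWZ α₀).exists_turning_point hg hf hα₀ hab.le
    have := ((hWZ α₀).lower_bound hg hk hμ.le hτ hup hdown hf (C := (α₀ * L) ^ p)
      (β := α₀ / (2 * E)) (fun r hr => by
        have hr' : r ∈ Icc a b := ⟨hr.1, hr.2.trans hτ.2⟩
        have hw0 : 0 ≤ W α₀ r := by
          have := mul_sub_le_sub_of_le_hasDerivAt hr.1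
            (fun t ht => (hWZ α₀).deriv_fst t ⟨ht.1, ht.2.trans hr'.2⟩) (C := 0)
            (fun t ht => hup t ⟨ht.1, ht.2.trans hr.2⟩)
          rw [(hWZ α₀).left] at this
          linarith
        rw [hfdef, truncPow_eq hw0 (hle α₀ hα₀ hα₀A r hr')]
        exact rpow_le_rpow hw0 ((hWZ α₀).le_mul_length hg hf hα₀.le hr') (by linarith))
      (by positivity) (by
        rw [mul_rpow hα₀.le hL0.le, ← hL, ← hE, mul_add]
        have : E * (α₀ / (2 * E)) = α₀ / 2 := by field_simp
        rw [this]
        linarith)).2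
    exact le_trans (by positivity) this
  have hlarge : W A b ≤ 0 := by
    by_contra! hpos
    obtain ⟨τ, hτ, hup, hdown⟩ := (hWZ A).exists_turning_point hg hf hA0 hab.le
    have hw := (hWZ A).nonneg_of_right_nonneg hg hf hpos.le
    have hfw : ∀ r ∈ Icc a b, f (W A r) = W A r ^ p := fun r hr =>
      truncPow_eq (hw r hr) (hle A hA0 le_rfl r hr)
    have hτH : W A τ ≤ H := (hWZ A).turning_value_le hg hk hκ hp hab hτ hup hdown hw hfw
    obtain ⟨hτb, hWb⟩ := (hWZ A).lower_bound hg hk hμ.le hτ hup hdown hf (C := H ^ p)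
      (β := H / L + 1) (fun r hr => by
        have hr' : r ∈ Icc a b := ⟨hr.1, hr.2.trans hτ.2⟩
        rw [hfw r hr']
        refine rpow_le_rpow (hw r hr') (le_trans ?_ hτH) (by linarith)
        have := mul_sub_le_sub_of_le_hasDerivAt hr.2
          (fun t ht => (hWZ A).deriv_fst t ⟨hr.1.trans ht.1, ht.2.trans hτ.2⟩) (C := 0)
          (fun t ht => hup t ⟨hr.1.trans ht.1, ht.2⟩)
        linarith)
      (by positivity) le_rfl
    rw [hτb] at hτH
    rw [← hL, add_mul, div_mul_cancel₀ _ hL0.ne'] at hWb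
    linarith
  obtain ⟨α, hα, hWα⟩ := intermediate_value_Icc' hα₀A hcont.continuousOn ⟨hlarge, hsmall⟩
  have hα0 : 0 < α := hα₀.trans_le hα.1
  have hWα : W α b = 0 := hWα
  have hw := (hWZ α).nonneg_of_right_nonneg hg hf hWα.ge
  refine ⟨W α, Z α, (hWZ α).deriv_fst, fun r hr => ?_, (hWZ α).left, hWα,
    (hWZ α).pos_of_right_eq_zero hg hf hf0 hfl hα0 hWα⟩
  have := (hWZ α).deriv_snd r hr
  rwa [hfdef, truncPow_eq (hw r hr) (hle α hα0 hα.2 r hr)] at this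

/-! ### Solving for the second derivative -/

section Ellipticity

variable {n : ℕ} {lam Lam : ℝ} {F : ℝ → ℝ → ℝ → ℝ}

theorem UnifElliptic.sub_snd (h : UnifElliptic n lam Lam F) {r m m' : ℝ} (hr : 0 < r) (l : ℝ)
    (hm : m' ≤ m) :
    lam * (m - m') ≤ F r m l - F r m' l ∧ F r m l - F r m' l ≤ Lam * (m - m') := by
  simpa using h r hr m' l (m - m') 0 (sub_nonneg.2 hm) le_rfl

theorem UnifElliptic.sub_thd (h : UnifElliptic n lam Lam F) {r l l' : ℝ} (hr : 0 < r) (m : ℝ)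
    (hl : l' ≤ l) :
    lam * (((n : ℝ) - 1) * (l - l')) ≤ F r m l - F r m l' ∧
      F r m l - F r m l' ≤ Lam * (((n : ℝ) - 1) * (l - l')) := by
  simpa using h r hr m l' 0 (l - l') le_rfl (sub_nonneg.2 hl)

theorem UnifElliptic.abs_sub_thd_le (h : UnifElliptic n lam Lam F) (hn : 2 ≤ n) (hlam : 0 < lam)
    {r : ℝ} (hr : 0 < r) (m l l' : ℝ) :
    |F r m l - F r m l'| ≤ Lam * ((n : ℝ) - 1) * |l - l'| := by
  have hn' : (2 : ℝ) ≤ n := by exact_mod_cast hn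
  wlog hl : l' ≤ l generalizing l l'
  · rw [abs_sub_comm, abs_sub_comm l]
    exact this l' l (le_of_not_ge hl)
  obtain ⟨h1, h2⟩ := h.sub_thd hr m hl
  have h0 : 0 ≤ lam * (((n : ℝ) - 1) * (l - l')) :=
    mul_nonneg hlam.le (mul_nonneg (by linarith) (sub_nonneg.2 hl))
  rw [abs_of_nonneg (h0.trans h1), abs_of_nonneg (sub_nonneg.2 hl)]
  linarith

theorem UnifElliptic.mul_abs_sub_le (h : UnifElliptic n lam Lam F)
    {r : ℝ} (hr : 0 < r) (m m' l : ℝ) : lam * |m - m'| ≤ |F r m l - F r m' l| := by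
  wlog hm : m' ≤ m generalizing m m'
  · rw [abs_sub_comm, abs_sub_comm (F r m l)]
    exact this m' m (le_of_not_ge hm)
  rw [abs_of_nonneg (sub_nonneg.2 hm)]
  exact (h.sub_snd hr l hm).1.trans (le_abs_self _)

theorem UnifElliptic.exists_eq (h : UnifElliptic n lam Lam F) (hlam : 0 < lam)
    (hF : Continuous fun x : ℝ × ℝ × ℝ => F x.1 x.2.1 x.2.2) {r : ℝ} (hr : 0 < r) (l c : ℝ) :
    ∃ m, F r m l = c := by
  have hcont : Continuous fun m => F r m l :=
    hF.comp (continuous_const.prodMk (continuous_id.prodMk continuous_const))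
  set s := |c - F r 0 l| / lam with hs
  have hs0 : 0 ≤ s := by positivity
  have hls : lam * s = |c - F r 0 l| := mul_div_cancel₀ _ hlam.ne'
  refine mem_range_of_exists_le_of_exists_ge hcont ⟨-s, ?_⟩ ⟨s, ?_⟩
  · have := (h.sub_snd hr l (neg_nonpos.2 hs0)).1
    have := neg_abs_le (c - F r 0 l)
    linarith
  · have := (h.sub_snd hr l hs0).1
    have := le_abs_self (c - F r 0 l)
    linarith

/-- Solving `F r m (q / r) = -c` for `m` yields a shooting field. -/
theorem UnifElliptic.exists_isShootingField (h : UnifElliptic n lam Lam F) (hn : 2 ≤ n)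
    (hlam : 0 < lam) (hlL : lam ≤ Lam)
    (hF : Continuous fun x : ℝ × ℝ × ℝ => F x.1 x.2.1 x.2.2) (hF0 : ∀ r, F r 0 0 = 0)
    {a : ℝ} (ha : 0 < a) :
    ∃ (g : ℝ → ℝ → ℝ → ℝ) (k : ℝ) (K : ℝ≥0), 0 ≤ k ∧ IsShootingField g k (1 / lam) (1 / Lam) K ∧
      ∀ r, a ≤ r → ∀ q c, F r (g r q c) (q / r) = -c := by
  have hLam : 0 < Lam := hlam.trans_le hlL
  have hn' : (2 : ℝ) ≤ n := by exact_mod_cast hn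
  have hρ : ∀ r, 0 < max a r := fun r => lt_max_of_lt_left ha
  choose g hgF using fun r q c => h.exists_eq hlam hF (hρ r) (q / max a r) (-c)
  set N : ℝ := (n : ℝ) - 1 with hN
  have hN1 : 1 ≤ N := by linarith
  set k := Lam * N / lam / a with hk
  have hk0 : 0 ≤ k := by positivity
  have hdiv : ∀ r q, |q / max a r| ≤ |q| / a := fun r q => by
    rw [abs_div, abs_of_pos (hρ r)]
    exact div_le_div_of_nonneg_left (abs_nonneg q) ha (le_max_left _ _)
  have hlk : ∀ q, Lam * N * (|q| / a) = lam * (k * |q|) := fun q => by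
    rw [hk]
    field_simp
  have hNq : ∀ r q, Lam * N * |q / max a r| ≤ lam * (k * |q|) := fun r q => by
    rw [← hlk]
    exact mul_le_mul_of_nonneg_left (hdiv r q) (by positivity)
  have hthd : ∀ r m q, |F (max a r) m (q / max a r) - F (max a r) m 0| ≤ lam * (k * |q|) :=
    fun r m q => by
      have := h.abs_sub_thd_le hn hlam (hρ r) m (q / max a r) 0
      rw [sub_zero] at this
      exact this.trans (hNq r q)
  refine ⟨g, k, ⟨k + 1 / lam, by positivity⟩, hk0, ⟨fun q c => ?_, fun r => ?_, fun r q c hc => ?_,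
    fun r q c hc => ?_, fun r q c hq hc => ?_⟩, fun r hr q c => ?_⟩
  · refine continuous_iff_continuousAt.2 fun r₀ => ?_
    set m₀ := g r₀ q c with hm₀
    have hcont : Continuous fun r => F (max a r) m₀ (q / max a r) :=
      hF.comp ((continuous_const.max continuous_id).prodMk (continuous_const.prodMk
        (continuous_const.div (continuous_const.max continuous_id) fun r => (hρ r).ne')))
    have hlim : Tendsto (fun r => |-c - F (max a r) m₀ (q / max a r)| / lam) (𝓝 r₀) (𝓝 0) := by
      have : Continuous fun r => |-c - F (max a r) m₀ (q / max a r)| / lam :=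
        (continuous_const.sub hcont).abs.div_const lam
      have h0 := this.tendsto r₀
      simpa [hm₀, hgF] using h0
    rw [ContinuousAt, tendsto_iff_dist_tendsto_zero]
    refine squeeze_zero (fun _ => dist_nonneg) (fun r => ?_) hlim
    rw [Real.dist_eq, le_div_iff₀ hlam, mul_comm]
    have := h.mul_abs_sub_le (hρ r) (g r q c) m₀ (q / max a r)
    rwa [hgF] at this
  · refine LipschitzWith.of_dist_le_mul fun x y => ?_
    rw [Real.dist_eq]
    change _ ≤ (k + 1 / lam) * dist x y
    have h1 := h.mul_abs_sub_le (hρ r) (g r x.1 x.2) (g r y.1 y.2) (x.1 / max a r)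
    have h2 := h.abs_sub_thd_le hn hlam (hρ r) (g r y.1 y.2) (y.1 / max a r) (x.1 / max a r)
    have h3 := hNq r (y.1 - x.1)
    rw [sub_div] at h3
    have hxy1 : |y.1 - x.1| ≤ dist x y := by
      rw [Prod.dist_eq, abs_sub_comm, ← Real.dist_eq]
      exact le_max_left _ _
    have hxy2 : |x.2 - y.2| ≤ dist x y := by
      rw [Prod.dist_eq, ← Real.dist_eq]
      exact le_max_right _ _
    rw [hgF] at h1 h2
    have h4 : |-x.2 - F (max a r) (g r y.1 y.2) (x.1 / max a r)| ≤
        |x.2 - y.2| + |-y.2 - F (max a r) (g r y.1 y.2) (x.1 / max a r)| := by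
      rw [abs_sub_comm x.2]
      refine le_trans (le_of_eq ?_) (abs_add_le _ _)
      congr 1
      ring
    have h5 : lam * (k * |y.1 - x.1|) ≤ lam * (k * dist x y) := by gcongr
    have h6 : lam * ((k + 1 / lam) * dist x y) = lam * (k * dist x y) + dist x y := by
      field_simp
    exact le_of_mul_le_mul_left (by linarith) hlam
  · have h1 := abs_le.1 (hthd r (g r q c) q)
    rw [hgF] at h1
    have hkq : 0 ≤ k * |q| := by positivity
    rcases le_total 0 (g r q c) with hm | hm
    · have : 0 ≤ 1 / lam * c := by positivity
      linarith
    · have h2 := (h.sub_snd (hρ r) 0 hm).1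
      rw [hF0] at h2
      have h3 : lam * (-(k * |q|) - 1 / lam * c) = -(lam * (k * |q|)) - c := by field_simp
      exact le_of_mul_le_mul_left (by linarith [h1.1, h1.2]) hlam
  · have h1 := abs_le.1 (hthd r (g r q c) q)
    rw [hgF] at h1
    have hkq : 0 ≤ k * |q| := by positivity
    rcases le_total 0 (g r q c) with hm | hm
    · have h2 := (h.sub_snd (hρ r) 0 hm).1
      rw [hF0] at h2
      have h3 : lam * (k * |q| - 1 / lam * c) = lam * (k * |q|) - c := by field_simp
      have h4 : g r q c ≤ k * |q| - 1 / lam * c :=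
        le_of_mul_le_mul_left (by linarith [h1.1, h1.2]) hlam
      have h5 : 1 / Lam * c ≤ 1 / lam * c := by gcongr
      linarith
    · have h2 := (h.sub_snd (hρ r) 0 hm).2
      rw [hF0] at h2
      have h3 : Lam * (k * |q| - 1 / Lam * c) = Lam * (k * |q|) - c := by field_simp
      have h4 : lam * (k * |q|) ≤ Lam * (k * |q|) := by gcongr
      exact le_of_mul_le_mul_left (by linarith [h1.1, h1.2]) hLam
  · by_contra! hm
    have h1 := (h.sub_snd (hρ r) (q / max a r) hm.le).1
    have h2 := (h.sub_thd (hρ r) 0 (div_nonneg hq (hρ r).le)).1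
    rw [hgF] at h1
    rw [hF0] at h2
    have h3 : 0 < lam * (g r q c - 0) := by
      rw [sub_zero]
      positivity
    have h4 : 0 ≤ lam * (((n : ℝ) - 1) * (q / max a r - 0)) := by
      rw [sub_zero]
      have := hρ r
      positivity
    linarith
  · have := hgF r q c
    rwa [max_eq_right hr] at this

theorem UnifElliptic.exists_positive_radial_solution (h : UnifElliptic n lam Lam F) (hn : 2 ≤ n)
    (hlam : 0 < lam) (hlL : lam ≤ Lam)
    (hF : Continuous fun x : ℝ × ℝ × ℝ => F x.1 x.2.1 x.2.2) (hF0 : ∀ r, F r 0 0 = 0)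
    {p : ℝ} (hp : 1 < p) {a b : ℝ} (ha : 0 < a) (hab : a < b) :
    ∃ w w' w'' : ℝ → ℝ,
      (∀ r ∈ Icc a b, HasDerivAt w (w' r) r) ∧
      (∀ r ∈ Icc a b, HasDerivAt w' (w'' r) r) ∧
      ContinuousOn w'' (Icc a b) ∧
      w a = 0 ∧ w b = 0 ∧
      (∀ r ∈ Ioo a b, 0 < w r) ∧
      (∀ r ∈ Ioo a b, -F r (w'' r) (w' r / r) = w r ^ p) := by
  obtain ⟨g, k, K, hk, hg, hgF⟩ := h.exists_isShootingField hn hlam hlL hF hF0 ha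
  obtain ⟨w, z, hw, hz, hwa, hwb, hpos⟩ := hg.exists_positive_solution hk
    (one_div_pos.2 hlam) (one_div_pos.2 (hlam.trans_le hlL)) hp hab
  refine ⟨w, z, fun r => g r (z r) (w r ^ p), hw, hz, ?_, hwa, hwb, hpos, fun r hr => ?_⟩
  · have hwc : ContinuousOn w (Icc a b) := fun r hr => (hw r hr).continuousAt.continuousWithinAt
    have hzc : ContinuousOn z (Icc a b) := fun r hr => (hz r hr).continuousAt.continuousWithinAt
    exact hg.continuous_uncurry.comp_continuousOn (continuousOn_id.prodMk
      (hzc.prodMk (hwc.rpow_const fun _ _ => Or.inr (by linarith))))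
  · rw [hgF r hr.1.le, neg_neg]

/-- Ellipticity is inherited by the operator conjugated with `u ↦ -u`. -/
theorem UnifElliptic.neg_comp_neg (h : UnifElliptic n lam Lam F) :
    UnifElliptic n lam Lam fun r m l => -F r (-m) (-l) := fun r hr m l s t hs ht => by
  have := h r hr (-(m + s)) (-(l + t)) s t hs ht
  rw [show -(m + s) + s = -m by ring, show -(l + t) + t = -l by ring] at this
  constructor <;> linarith [this.1, this.2]

end Ellipticity

end RadialSolutions

/-- Theorem 1 (paper): the Dirichlet problem `−F(x,D²u) = |u|^{p−1}u` in the annulus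
`A_{a,b}` has a positive and a negative radial solution for every `p > 1`. -/
theorem positive_and_negative_radial_solutions_in_annulus
    (n : ℕ) (hn : 2 ≤ n) (lam Lam p : ℝ) (hlam : 0 < lam) (hlL : lam ≤ Lam) (hp : 1 < p)
    (F : ℝ → ℝ → ℝ → ℝ)
    (hFcont : Continuous fun x : ℝ × ℝ × ℝ => F x.1 x.2.1 x.2.2)
    (hF0 : ∀ r : ℝ, F r 0 0 = 0)
    (hFell : UnifElliptic n lam Lam F)
    (a b : ℝ) (ha : 0 < a) (hab : a < b) :
    (∃ w w' w'' : ℝ → ℝ,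
      (∀ r ∈ Icc a b, HasDerivAt w (w' r) r) ∧
      (∀ r ∈ Icc a b, HasDerivAt w' (w'' r) r) ∧
      ContinuousOn w'' (Icc a b) ∧
      w a = 0 ∧ w b = 0 ∧
      (∀ r ∈ Ioo a b, 0 < w r) ∧
      (∀ r ∈ Ioo a b, -F r (w'' r) (w' r / r) = w r ^ p)) ∧
    (∃ w w' w'' : ℝ → ℝ,
      (∀ r ∈ Icc a b, HasDerivAt w (w' r) r) ∧
      (∀ r ∈ Icc a b, HasDerivAt w' (w'' r) r) ∧
      ContinuousOn w'' (Icc a b) ∧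
      w a = 0 ∧ w b = 0 ∧
      (∀ r ∈ Ioo a b, w r < 0) ∧
      (∀ r ∈ Ioo a b, -F r (w'' r) (w' r / r) = -(|w r| ^ p))) := by
  refine ⟨hFell.exists_positive_radial_solution hn hlam hlL hFcont hF0 hp ha hab, ?_⟩
  obtain ⟨w, w', w'', hw, hw', hc, hwa, hwb, hpos, heq⟩ :=
    hFell.neg_comp_neg.exists_positive_radial_solution hn hlam hlL
      (hFcont.comp (continuous_fst.prodMk (continuous_snd.fst.neg.prodMk continuous_snd.snd.neg))).neg
      (fun r => by simp [hF0]) hp ha hab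
  refine ⟨fun r => -w r, fun r => -w' r, fun r => -w'' r, fun r hr => (hw r hr).neg,
    fun r hr => (hw' r hr).neg, hc.neg, by simp [hwa], by simp [hwb],
    fun r hr => neg_lt_zero.2 (hpos r hr), fun r hr => ?_⟩
  have h := heq r hr
  rw [neg_neg] at h
  rw [neg_div, h, abs_neg, abs_of_pos (hpos r hr)]
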